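/- arXiv:1511.07579 — 5 statements merged into one kernel-verified Lean document; each statement's English description precedes it below -/
import Mathlib

section
/- Let φ, ψ : ℝ² → 𝒜 and p, q : ℝ² → ℝ be C¹ maps satisfying the Dirac-type system ∂_a φ = −p·ψ and ∂_â ψ = −q·φ. Then ∂_a(ψ̂·φ) = ∂_â(ψ·φ̂). (This is the closedness condition ensuring that the 1-forms in the generalized Weierstrass representation have path-independent integrals.) -/
noncomputable section

/-! ### The algebra `𝒜` of Lorentz (split-complex) numbers.

We realize `𝒜` (the real algebra with basis `{1, σ}`, `σ² = 1`) in split coordinates: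
`(x, y) : ℝ × ℝ` represents `u + σ v` with `x = u + v`, `y = u - v`.  Multiplication is then
componentwise, `1 = (1,1)`, and `σ = (1, -1)` satisfies `σ² = 1`. -/

abbrev LorentzA : Type := ℝ × ℝ

/-- The element `σ ∈ 𝒜`, with `σ² = 1`, `σ ∉ ℝ·1`. -/
def sA : LorentzA := (1, -1)

/-- The element `u + σ v` of `𝒜`. -/
def mkA (u v : ℝ) : LorentzA := (u + v, u - v)

/-- The inclusion `ℝ ⊆ 𝒜`, `t ↦ t·1`. -/
def toA (t : ℝ) : LorentzA := (t, t)

/-- Conjugation of `𝒜`: `u + σ v ↦ u - σ v` (the swap, in split coordinates). -/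
def conjA (a : LorentzA) : LorentzA := (a.2, a.1)

/-- `|a|² := a·â = u² - v²`, as a real number (so that `a * conjA a = toA (nsqA a)`). -/
def nsqA (a : LorentzA) : ℝ := a.1 * a.2

/-- The real part of `a = u + σ v ∈ 𝒜`, namely `u`. -/
def ReA (a : LorentzA) : ℝ := (a.1 + a.2) / 2

/-- The imaginary part of `a = u + σ v ∈ 𝒜`, namely `v`. -/
def ImA (a : LorentzA) : ℝ := (a.1 - a.2) / 2

/-- The idempotent `(1 + σ)/2` of `𝒜`. -/
def eP : LorentzA := (1 + sA) / 2

/-- The idempotent `(1 - σ)/2` of `𝒜`. -/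
def eM : LorentzA := (1 - sA) / 2

/-! ### Derivatives of maps `ℝ² → 𝒜` and `ℝ² → ℝ`. -/

/-- `∂_u f`. -/
def duA (f : ℝ × ℝ → LorentzA) (x : ℝ × ℝ) : LorentzA := fderiv ℝ f x (1, 0)

/-- `∂_v f`. -/
def dvA (f : ℝ × ℝ → LorentzA) (x : ℝ × ℝ) : LorentzA := fderiv ℝ f x (0, 1)

/-- `∂_a f = ½ (∂_u f + σ ∂_v f)`. -/
def Da (f : ℝ × ℝ → LorentzA) (x : ℝ × ℝ) : LorentzA := ((2:ℝ)⁻¹) • (duA f x + sA * dvA f x)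

/-- `∂_â f = ½ (∂_u f - σ ∂_v f)`.  A map is conformal iff `∂_â f = 0`. -/
def Dahat (f : ℝ × ℝ → LorentzA) (x : ℝ × ℝ) : LorentzA := ((2:ℝ)⁻¹) • (duA f x - sA * dvA f x)

/-- `∂_u f` for real-valued `f`. -/
def duR (f : ℝ × ℝ → ℝ) (x : ℝ × ℝ) : ℝ := fderiv ℝ f x (1, 0)

/-- `∂_v f` for real-valued `f`. -/
def dvR (f : ℝ × ℝ → ℝ) (x : ℝ × ℝ) : ℝ := fderiv ℝ f x (0, 1)

/-- `∂²f/∂u²`. -/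
def duuR (f : ℝ × ℝ → ℝ) (x : ℝ × ℝ) : ℝ := fderiv ℝ (fun y => fderiv ℝ f y (1, 0)) x (1, 0)

/-- `∂²f/∂v²`. -/
def dvvR (f : ℝ × ℝ → ℝ) (x : ℝ × ℝ) : ℝ := fderiv ℝ (fun y => fderiv ℝ f y (0, 1)) x (0, 1)

/-- The wave operator `□ f = -∂²f/∂u² + ∂²f/∂v²`. -/
def boxR (f : ℝ × ℝ → ℝ) (x : ℝ × ℝ) : ℝ := -duuR f x + dvvR f x

/-! ### 2×2 matrices over `𝒜`. -/

abbrev M2A := Matrix (Fin 2) (Fin 2) LorentzA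

/-- The conjugate transpose `B*` of `B ∈ M₂(𝒜)`. -/
def ctrans (B : M2A) : M2A := (B.map conjA).transpose

/-- `Herm₂(𝒜) = {B ∈ M₂(𝒜) : B = B*}`. -/
def Herm2 : Set M2A := {B | B = ctrans B}

/-- `SL₂(𝒜) = {B ∈ M₂(𝒜) : det B = 1}`. -/
def SL2A : Set M2A := {B | B.det = 1}

/-- The inclusion `M₂(ℝ) ⊆ M₂(𝒜)`. -/
def mR (C : Matrix (Fin 2) (Fin 2) ℝ) : M2A := C.map toA

/-! ### The complexified Lorentz numbers `𝒜_ℂ = 𝒜 ⊗ ℂ ≅ ℂ × ℂ` (split coordinates),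
and the quaternions `ℍ^{𝒜_ℂ}` with coefficients in `𝒜_ℂ`. -/

abbrev AC : Type := ℂ × ℂ

/-- `σ ∈ 𝒜_ℂ`. -/
def sC : AC := (1, -1)

/-- The complex unit `i ∈ 𝒜_ℂ`. -/
def iC : AC := (Complex.I, Complex.I)

/-- Conjugation `u + σ v ↦ u - σ v` (`u, v ∈ ℂ`) of `𝒜_ℂ`. -/
def hatC (z : AC) : AC := (z.2, z.1)

/-- The inclusion `ℝ ⊆ 𝒜_ℂ`. -/
def rc (t : ℝ) : AC := ((t : ℂ), (t : ℂ))

/-- The inclusion `𝒜 ⊆ 𝒜_ℂ`. -/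
def toAC (a : LorentzA) : AC := ((a.1 : ℂ), (a.2 : ℂ))

/-- `a ↦ i·a`, the image of `𝒜` in `i·𝒜 ⊆ 𝒜_ℂ`. -/
def iAC (a : LorentzA) : AC := (Complex.I * a.1, Complex.I * a.2)

/-- `ℍ^{𝒜_ℂ}`: quaternions `ζ₀·1 + ζ₁·I + ζ₂·J + ζ₃·K` with `ζᵢ ∈ 𝒜_ℂ`,
`I² = J² = K² = -1`, `IJ = -JI = K`. -/
abbrev HAC := Quaternion AC

/-- The scalar quaternion `z·1`. -/
def qscalar (z : AC) : HAC := ⟨z, 0, 0, 0⟩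

/-- The quaternion unit `I`. -/
def qI : HAC := ⟨0, 1, 0, 0⟩

/-- The quaternion unit `J`. -/
def qJ : HAC := ⟨0, 0, 1, 0⟩

/-- The quaternion unit `K`. -/
def qK : HAC := ⟨0, 0, 0, 1⟩

/-- `ζ̂`: apply `𝒜_ℂ`-conjugation to each coefficient of a quaternion.
(Quaternionic conjugation `ζ̄` is `star ζ`.) -/
def qhat (q : HAC) : HAC := ⟨hatC q.re, hatC q.imI, hatC q.imJ, hatC q.imK⟩

/-- `H(ζ, ζ') = ½(ζ ζ̄' + ζ' ζ̄) = ζ₀ζ₀' + ζ₁ζ₁' + ζ₂ζ₂' + ζ₃ζ₃' ∈ 𝒜_ℂ`. -/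
def Hform (q q' : HAC) : AC := q.re * q'.re + q.imI * q'.imI + q.imJ * q'.imJ + q.imK * q'.imK

/-- `p₀·1 + i p₁·I + p₂·J + i p₃·K` with `pᵢ ∈ 𝒜`: the generic element of `ℍ₀`. -/
def mk0 (p₀ p₁ p₂ p₃ : LorentzA) : HAC :=
  qscalar (toAC p₀) + qscalar (iAC p₁) * qI + qscalar (toAC p₂) * qJ + qscalar (iAC p₃) * qK

/-- `i q₀·1 + q₁·I + i q₂·J + q₃·K` with `qᵢ ∈ 𝒜`: the generic element of `ℍ₁`. -/
def mk1 (q₀ q₁ q₂ q₃ : LorentzA) : HAC :=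
  qscalar (iAC q₀) + qscalar (toAC q₁) * qI + qscalar (iAC q₂) * qJ + qscalar (toAC q₃) * qK

/-- `ℍ₀ = {p₀·1 + i p₁·I + p₂·J + i p₃·K : pᵢ ∈ 𝒜} ⊆ ℍ^{𝒜_ℂ}`. -/
def H0set : Set HAC := {ζ | ∃ p₀ p₁ p₂ p₃ : LorentzA, ζ = mk0 p₀ p₁ p₂ p₃}

/-- `ℍ₁ = {i q₀·1 + q₁·I + i q₂·J + q₃·K : qᵢ ∈ 𝒜} ⊆ ℍ^{𝒜_ℂ}`. -/
def H1set : Set HAC := {ζ | ∃ q₀ q₁ q₂ q₃ : LorentzA, ζ = mk1 q₀ q₁ q₂ q₃}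

/-- `Spin(2,2) = {p ∈ ℍ₀ : H(p,p) = 1}`. -/
def SpinSet : Set HAC := {p | p ∈ H0set ∧ Hform p p = 1}

/-- Extraction of the `𝒜`-coefficient of an element of `𝒜 ⊆ 𝒜_ℂ`. -/
def reEx (z : AC) : LorentzA := (z.1.re, z.2.re)

/-- Extraction of the `𝒜`-coefficient of an element of `i·𝒜 ⊆ 𝒜_ℂ`. -/
def imEx (z : AC) : LorentzA := (z.1.im, z.2.im)

/-- The map `A₀ : ℍ₀ → M₂(𝒜)`,
`p₀·1 + i p₁·I + p₂·J + i p₃·K ↦ [[p₀ - σp₁, p₂ - σp₃], [-p₂ - σp₃, p₀ + σp₁]]`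
(written via coefficient extraction, so that it is a total function on `ℍ^{𝒜_ℂ}`
agreeing with `A₀` on `ℍ₀`). -/
def A0 (ζ : HAC) : M2A :=
  !![reEx ζ.re - sA * imEx ζ.imI, reEx ζ.imJ - sA * imEx ζ.imK;
     -reEx ζ.imJ - sA * imEx ζ.imK, reEx ζ.re + sA * imEx ζ.imI]

/-- The map `A₁ : ℍ₁ → M₂(𝒜)`,
`i q₀·1 + q₁·I + i q₂·J + q₃·K ↦ [[-q₁ - σq₀, -q₃ - σq₂], [-q₃ + σq₂, q₁ - σq₀]]`. -/
def A1 (ζ : HAC) : M2A :=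
  !![-reEx ζ.imI - sA * imEx ζ.re, -reEx ζ.imK - sA * imEx ζ.imJ;
     -reEx ζ.imK + sA * imEx ζ.imJ, reEx ζ.imI - sA * imEx ζ.re]

/-! Conjugation exchanges `∂_a` and `∂_â` and carries `ψ̂·φ` to `ψ·φ̂`, so the assertion is that
`∂_a (ψ̂·φ)` is its own conjugate. By the Leibniz rule and the Dirac system,
`∂_a (ψ̂·φ) = -(p |ψ|² + q |φ|²)`, which is real. -/

theorem conjA_conjA (a : LorentzA) : conjA (conjA a) = a := rfl

theorem conjA_neg (a : LorentzA) : conjA (-a) = -conjA a := rfl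

theorem conjA_sub (a b : LorentzA) : conjA (a - b) = conjA a - conjA b := rfl

theorem conjA_smul (t : ℝ) (a : LorentzA) : conjA (t • a) = t • conjA a := rfl

theorem conjA_mul (a b : LorentzA) : conjA (a * b) = conjA a * conjA b := rfl

theorem conjA_sA : conjA sA = -sA :=
  Prod.ext rfl (neg_neg 1).symm

theorem conjA_toA (t : ℝ) : conjA (toA t) = toA t := rfl

theorem toA_add (s t : ℝ) : toA (s + t) = toA s + toA t := rfl

theorem toA_mul (s t : ℝ) : toA (s * t) = toA s * toA t := rfl

theorem toA_neg (t : ℝ) : toA (-t) = -toA t := rfl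

theorem mul_conjA_self (a : LorentzA) : a * conjA a = toA (nsqA a) :=
  Prod.ext rfl (mul_comm a.2 a.1)

section Derivatives

variable {f g : ℝ × ℝ → LorentzA} {x : ℝ × ℝ}

theorem differentiableAt_conjA_comp (hf : DifferentiableAt ℝ f x) :
    DifferentiableAt ℝ (fun y => conjA (f y)) x :=
  hf.snd.prodMk hf.fst

theorem fderiv_conjA_comp_apply (f : ℝ × ℝ → LorentzA) (x w : ℝ × ℝ) :
    fderiv ℝ (fun y => conjA (f y)) x w = conjA (fderiv ℝ f x w) :=
  DFunLike.congr_fun (ContinuousLinearEquiv.prodComm ℝ ℝ ℝ).comp_fderiv w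

theorem Da_conjA_comp (f : ℝ × ℝ → LorentzA) (x : ℝ × ℝ) :
    Da (fun y => conjA (f y)) x = conjA (Dahat f x) := by
  simp only [Da, Dahat, duA, dvA, fderiv_conjA_comp_apply]
  rw [conjA_smul, conjA_sub, conjA_mul, conjA_sA, neg_mul, sub_neg_eq_add]

theorem Dahat_conjA_comp (f : ℝ × ℝ → LorentzA) (x : ℝ × ℝ) :
    Dahat (fun y => conjA (f y)) x = conjA (Da f x) :=
  congrArg conjA (Da_conjA_comp (fun y => conjA (f y)) x).symm

theorem Da_mul (hf : DifferentiableAt ℝ f x) (hg : DifferentiableAt ℝ g x) :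
    Da (fun y => f y * g y) x = Da f x * g x + f x * Da g x := by
  simp only [Da, duA, dvA, fderiv_fun_mul hf hg, add_apply, smul_apply, smul_eq_mul,
    smul_mul_assoc, mul_smul_comm, ← smul_add]
  congr 1
  ring

end Derivatives

section DiracSystem

variable {φ ψ : ℝ × ℝ → LorentzA} {x : ℝ × ℝ} {p q : ℝ}

theorem Da_conjA_mul_of_dirac (hφ : DifferentiableAt ℝ φ x) (hψ : DifferentiableAt ℝ ψ x)
    (hDφ : Da φ x = -toA p * ψ x) (hDψ : Dahat ψ x = -toA q * φ x) :
    Da (fun y => conjA (ψ y) * φ y) x = toA (-(p * nsqA (ψ x) + q * nsqA (φ x))) :=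
  calc
    _ = conjA (Dahat ψ x) * φ x + conjA (ψ x) * Da φ x := by
      rw [Da_mul (differentiableAt_conjA_comp hψ) hφ, Da_conjA_comp]
    _ = -(toA p * (ψ x * conjA (ψ x)) + toA q * (φ x * conjA (φ x))) := by
      rw [hDφ, hDψ, conjA_mul, conjA_neg, conjA_toA]
      ring
    _ = toA (-(p * nsqA (ψ x) + q * nsqA (φ x))) := by
      rw [mul_conjA_self, mul_conjA_self, toA_neg, toA_add, toA_mul, toA_mul]

theorem stmt11_general (hφ : DifferentiableAt ℝ φ x) (hψ : DifferentiableAt ℝ ψ x)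
    (hDφ : Da φ x = -toA p * ψ x) (hDψ : Dahat ψ x = -toA q * φ x) :
    Da (fun y => conjA (ψ y) * φ y) x = Dahat (fun y => ψ y * conjA (φ y)) x :=
  calc
    _ = conjA (Da (fun y => conjA (ψ y) * φ y) x) := by
      rw [Da_conjA_mul_of_dirac hφ hψ hDφ hDψ, conjA_toA]
    _ = Dahat (fun y => conjA (conjA (ψ y) * φ y)) x := (Dahat_conjA_comp _ x).symm
    _ = Dahat (fun y => ψ y * conjA (φ y)) x := by
      simp only [conjA_mul, conjA_conjA]

end DiracSystem

/-- If `φ, ψ : ℝ² → 𝒜` and `p, q : ℝ² → ℝ` are `C¹` and satisfy the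
Dirac-type system `∂_a φ = -p·ψ`, `∂_â ψ = -q·φ`, then `∂_a (ψ̂·φ) = ∂_â (ψ·φ̂)`. -/
theorem stmt11 (φ ψ : ℝ × ℝ → LorentzA) (p q : ℝ × ℝ → ℝ)
    (hφ : ContDiff ℝ 1 φ) (hψ : ContDiff ℝ 1 ψ)
    (hp : ContDiff ℝ 1 p) (hq : ContDiff ℝ 1 q)
    (hD1 : ∀ x, Da φ x = -toA (p x) * ψ x)
    (hD2 : ∀ x, Dahat ψ x = -toA (q x) * φ x) :
    ∀ x, Da (fun y => conjA (ψ y) * φ y) x = Dahat (fun y => ψ y * conjA (φ y)) x := by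
  exact fun x => stmt11_general (hφ.differentiable one_ne_zero x)
    (hψ.differentiable one_ne_zero x) (hD1 x) (hD2 x)
end
end

section
/- Let ψ₁, ψ₂, φ̂₁, φ̂₂ : ℝ² → 𝒜 be conformal maps (i.e. ∂_â ψ₁ = ∂_â ψ₂ = ∂_â φ̂₁ = ∂_â φ̂₂ = 0), and let F = (F₀, F₁, F₂, F₃) : ℝ² → ℝ⁴ be C² with differential prescribed by the Weierstrass integrands: for X = (X₁, X₂) ∈ ℝ² and z := X₁ + σX₂, dF₀(X) = Re((−ψ₁φ̂₁ + ψ₂φ̂₂)·z), dF₁(X) = Re((−ψ₁φ̂₁ − ψ₂φ̂₂)·z), dF₂(X) = Re((ψ₂φ̂₁ + ψ₁φ̂₂)·z), dF₃(X) = Im((−ψ₂φ̂₁ + ψ₁φ̂₂)·z). Then F satisfies the conformality relations ⟨∂_u F, ∂_v F⟩ = 0, −⟨∂_u F, ∂_u F⟩ = ⟨∂_v F, ∂_v F⟩ = |ψ₂φ₁ − ψ₁φ₂|², and the wave equation −∂²F/∂u² + ∂²F/∂v² = 0; hence wherever |ψ₂φ₁ − ψ₁φ₂|² ≠ 0, F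 is a conformal minimal immersion of a Lorentz surface into ℝ^{2,2}. -/
noncomputable section

/-! In the null coordinates `s = u + v`, `t = u - v` the prescribed differential has the form
`n₊ ds + n₋ dt` with `n₊`, `n₋` null vectors of `ℝ^{2,2}` and `⟨n₊, n₋⟩ = -½|ψ₂φ₁ - ψ₁φ₂|²`; hence
the induced metric is `|ψ₂φ₁ - ψ₁φ₂|² (dv² - du²)`, which gives the conformality relations, and its
nondegeneracy gives injectivity. Each component of `F` satisfies `dF = Re(g z)` with `g` in the
algebra of conformal maps, so `∂_u F = Re g`, `∂_v F = Re(σg)` and the wave operator takes `F` to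
`-2 Re(∂_â g) = 0`. -/

section Weierstrass

open scoped Topology

lemma ReA_sA_mul (a : LorentzA) : ReA (sA * a) = ImA a := by
  simp [ReA, ImA, sA, sub_eq_add_neg]

lemma ReA_mul_mkA (a : LorentzA) (u v : ℝ) :
    ReA (a * mkA u v) = ReA a * u + ReA (sA * a) * v := by
  simp only [ReA, sA, mkA, Prod.fst_mul, Prod.snd_mul]
  ring

section Dahat

variable {f g : ℝ × ℝ → LorentzA} {x : ℝ × ℝ}

lemma Dahat_const (c : LorentzA) : Dahat (fun _ => c) x = 0 := by
  simp [Dahat, duA, dvA]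

lemma Dahat_add (hf : DifferentiableAt ℝ f x) (hg : DifferentiableAt ℝ g x) :
    Dahat (f + g) x = Dahat f x + Dahat g x := by
  simp only [Dahat, duA, dvA, fderiv_add hf hg, add_apply, ← smul_add]
  congr 1
  ring

lemma Dahat_mul (hf : DifferentiableAt ℝ f x) (hg : DifferentiableAt ℝ g x) :
    Dahat (f * g) x = f x * Dahat g x + g x * Dahat f x := by
  simp only [Dahat, duA, dvA, fderiv_mul hf hg, add_apply, smul_apply,
    smul_eq_mul, mul_smul_comm, ← smul_add]
  congr 1
  ring

end Dahat

/-- The `𝒜`-algebra of maps `ℝ² → 𝒜` that are conformal at the point `x`, i.e. differentiable at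
`x` with `∂_â f x = 0`. -/
def conformalSubalgebra (x : ℝ × ℝ) : Subalgebra LorentzA (ℝ × ℝ → LorentzA) where
  carrier := {f | DifferentiableAt ℝ f x ∧ Dahat f x = 0}
  add_mem' hf hg := ⟨hf.1.add hg.1, by rw [Dahat_add hf.1 hg.1, hf.2, hg.2, add_zero]⟩
  mul_mem' hf hg := ⟨hf.1.mul hg.1, by rw [Dahat_mul hf.1 hg.1, hf.2, hg.2]; simp⟩
  algebraMap_mem' c := ⟨differentiableAt_const c, Dahat_const c⟩

/-- The differential `X ↦ Re(a z)`, `z = X₁ + σX₂`, of a function with Weierstrass integrand `a`. -/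
def reMul (a : LorentzA) : ℝ × ℝ →L[ℝ] ℝ :=
  ReA a • ContinuousLinearMap.fst ℝ ℝ ℝ + ReA (sA * a) • ContinuousLinearMap.snd ℝ ℝ ℝ

lemma reMul_apply (a : LorentzA) (X : ℝ × ℝ) : reMul a X = ReA (a * mkA X.1 X.2) := by
  simp [reMul, ReA_mul_mkA]

lemma hasFDerivAt_reMul {F : ℝ × ℝ → ℝ} {a : LorentzA} {x : ℝ × ℝ} (hF : DifferentiableAt ℝ F x)
    (h : ∀ X : ℝ × ℝ, fderiv ℝ F x X = ReA (a * mkA X.1 X.2)) : HasFDerivAt F (reMul a) x :=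
  hF.hasFDerivAt.congr_fderiv <| ContinuousLinearMap.ext fun X => by rw [h, reMul_apply]

lemma hasFDerivAt_reMul_sA_mul {F : ℝ × ℝ → ℝ} {a : LorentzA} {x : ℝ × ℝ}
    (hF : DifferentiableAt ℝ F x) (h : ∀ X : ℝ × ℝ, fderiv ℝ F x X = ImA (a * mkA X.1 X.2)) :
    HasFDerivAt F (reMul (sA * a)) x :=
  hasFDerivAt_reMul hF fun X => by rw [h, mul_assoc, ReA_sA_mul]

lemma fderiv_ReA_comp {E : Type*} [NormedAddCommGroup E] [NormedSpace ℝ E] {g : E → LorentzA}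
    {x : E} (hg : DifferentiableAt ℝ g x) (X : E) :
    fderiv ℝ (fun y => ReA (g y)) x X = ReA (fderiv ℝ g x X) := by
  have h : HasFDerivAt (fun y => ((g y).1 + (g y).2) * 2⁻¹) _ x :=
    (hg.hasFDerivAt.fst.add hg.hasFDerivAt.snd).mul_const 2⁻¹
  simp only [ReA, div_eq_mul_inv, h.fderiv]
  simp [mul_comm, mul_add]

lemma boxR_eq_neg_two_mul_ReA_Dahat {F : ℝ × ℝ → ℝ} {g : ℝ × ℝ → LorentzA} {x : ℝ × ℝ}
    (hg : DifferentiableAt ℝ g x) (hF : ∀ᶠ y in 𝓝 x, HasFDerivAt F (reMul (g y)) y) :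
    boxR F x = -2 * ReA (Dahat g x) := by
  have hu : (fun y => fderiv ℝ F y (1, 0)) =ᶠ[𝓝 x] fun y => ReA (g y) :=
    hF.mono fun y hy => by simp [hy.fderiv, reMul]
  have hv : (fun y => fderiv ℝ F y (0, 1)) =ᶠ[𝓝 x] fun y => ReA (sA * g y) :=
    hF.mono fun y hy => by simp [hy.fderiv, reMul]
  have huu : duuR F x = ReA (duA g x) := by
    rw [duuR, hu.fderiv_eq, fderiv_ReA_comp hg, duA]
  have hvv : dvvR F x = ReA (sA * dvA g x) := by
    rw [dvvR, hv.fderiv_eq, fderiv_ReA_comp (hg.const_mul sA), fderiv_const_mul hg]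
    rfl
  rw [boxR, huu, hvv]
  simp only [Dahat, ReA, Prod.smul_fst, Prod.smul_snd, Prod.fst_sub, Prod.snd_sub, smul_eq_mul]
  ring

lemma boxR_eq_zero_of_mem_conformalSubalgebra {F : ℝ × ℝ → ℝ} {g : ℝ × ℝ → LorentzA} {x : ℝ × ℝ}
    (hg : g ∈ conformalSubalgebra x) (hF : ∀ᶠ y in 𝓝 x, HasFDerivAt F (reMul (g y)) y) :
    boxR F x = 0 := by
  rw [boxR_eq_neg_two_mul_ReA_Dahat hg.1 hF, hg.2]
  simp [ReA]

/-- The inner product of `ℝ^{2,2}`, on `ℝ⁴` encoded as an iterated product. -/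
def neutralForm (p q : ℝ × ℝ × ℝ × ℝ) : ℝ :=
  -(p.1 * q.1) + p.2.1 * q.2.1 - p.2.2.1 * q.2.2.1 + p.2.2.2 * q.2.2.2

/-- The differential of `F = (F₀, F₁, F₂, F₃)` at a point where `ψ₁, ψ₂, φ̂₁, φ̂₂` take the values
`a, b, c, d`. The factor `σ` in the last component accounts for `Im w = Re(σw)`. -/
def weierstrassDifferential (a b c d : LorentzA) : ℝ × ℝ →L[ℝ] ℝ × ℝ × ℝ × ℝ :=
  (reMul (-(a * c) + b * d)).prod <| (reMul (-(a * c) - b * d)).prod <|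
    (reMul (b * c + a * d)).prod <| reMul (sA * (-(b * c) + a * d))

lemma hasFDerivAt_weierstrassDifferential {F₀ F₁ F₂ F₃ : ℝ × ℝ → ℝ} {a b c d : LorentzA}
    {x : ℝ × ℝ} (hF₀ : DifferentiableAt ℝ F₀ x) (hF₁ : DifferentiableAt ℝ F₁ x)
    (hF₂ : DifferentiableAt ℝ F₂ x) (hF₃ : DifferentiableAt ℝ F₃ x)
    (h₀ : ∀ X : ℝ × ℝ, fderiv ℝ F₀ x X = ReA ((-(a * c) + b * d) * mkA X.1 X.2))
    (h₁ : ∀ X : ℝ × ℝ, fderiv ℝ F₁ x X = ReA ((-(a * c) - b * d) * mkA X.1 X.2))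
    (h₂ : ∀ X : ℝ × ℝ, fderiv ℝ F₂ x X = ReA ((b * c + a * d) * mkA X.1 X.2))
    (h₃ : ∀ X : ℝ × ℝ, fderiv ℝ F₃ x X = ImA ((-(b * c) + a * d) * mkA X.1 X.2)) :
    HasFDerivAt (fun y => (F₀ y, F₁ y, F₂ y, F₃ y)) (weierstrassDifferential a b c d) x :=
  (hasFDerivAt_reMul hF₀ h₀).prodMk <| (hasFDerivAt_reMul hF₁ h₁).prodMk <|
    (hasFDerivAt_reMul hF₂ h₂).prodMk <| hasFDerivAt_reMul_sA_mul hF₃ h₃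

lemma neutralForm_weierstrassDifferential (a b c d : LorentzA) (X Y : ℝ × ℝ) :
    neutralForm (weierstrassDifferential a b c d X) (weierstrassDifferential a b c d Y) =
      nsqA (b * conjA c - a * conjA d) * (X.2 * Y.2 - X.1 * Y.1) := by
  simp only [neutralForm, weierstrassDifferential, ContinuousLinearMap.prod_apply, reMul_apply,
    ReA, sA, mkA, nsqA, conjA, Prod.fst_mul, Prod.snd_mul, Prod.fst_add, Prod.snd_add,
    Prod.fst_sub, Prod.snd_sub, Prod.fst_neg, Prod.snd_neg]
  ring

lemma weierstrassDifferential_injective {a b c d : LorentzA}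
    (h : nsqA (b * conjA c - a * conjA d) ≠ 0) :
    Function.Injective (weierstrassDifferential a b c d) := by
  refine (injective_iff_map_eq_zero _).2 fun X hX => ?_
  have orthogonal (Y : ℝ × ℝ) : X.2 * Y.2 - X.1 * Y.1 = 0 := by
    have hY := neutralForm_weierstrassDifferential a b c d X Y
    rw [hX] at hY
    simpa [neutralForm, h] using hY
  have h₁ : X.1 = 0 := by simpa using orthogonal (1, 0)
  have h₂ : X.2 = 0 := by simpa using orthogonal (0, 1)
  exact Prod.ext h₁ h₂

theorem stmt14_general {ψ₁ ψ₂ φh₁ φh₂ : ℝ × ℝ → LorentzA} {F₀ F₁ F₂ F₃ : ℝ × ℝ → ℝ} {x : ℝ × ℝ}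
    (hψ₁ : ψ₁ ∈ conformalSubalgebra x) (hψ₂ : ψ₂ ∈ conformalSubalgebra x)
    (hφh₁ : φh₁ ∈ conformalSubalgebra x) (hφh₂ : φh₂ ∈ conformalSubalgebra x)
    (hF : ∀ᶠ y in 𝓝 x, HasFDerivAt (fun y => (F₀ y, F₁ y, F₂ y, F₃ y))
      (weierstrassDifferential (ψ₁ y) (ψ₂ y) (φh₁ y) (φh₂ y)) y) :
    (-(duR F₀ x * dvR F₀ x) + duR F₁ x * dvR F₁ x - duR F₂ x * dvR F₂ x +
      duR F₃ x * dvR F₃ x = 0) ∧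
    (-(-(duR F₀ x) ^ 2 + (duR F₁ x) ^ 2 - (duR F₂ x) ^ 2 + (duR F₃ x) ^ 2) =
      nsqA (ψ₂ x * conjA (φh₁ x) - ψ₁ x * conjA (φh₂ x))) ∧
    (-(dvR F₀ x) ^ 2 + (dvR F₁ x) ^ 2 - (dvR F₂ x) ^ 2 + (dvR F₃ x) ^ 2 =
      nsqA (ψ₂ x * conjA (φh₁ x) - ψ₁ x * conjA (φh₂ x))) ∧
    (boxR F₀ x = 0 ∧ boxR F₁ x = 0 ∧ boxR F₂ x = 0 ∧ boxR F₃ x = 0) ∧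
    (nsqA (ψ₂ x * conjA (φh₁ x) - ψ₁ x * conjA (φh₂ x)) ≠ 0 →
      Function.Injective fun X : ℝ × ℝ =>
        (fderiv ℝ F₀ x X, fderiv ℝ F₁ x X, fderiv ℝ F₂ x X, fderiv ℝ F₃ x X)) := by
  have hF₀ := hF.mono fun y hy => hy.fst
  have hF₁ := hF.mono fun y hy => hy.snd.fst
  have hF₂ := hF.mono fun y hy => hy.snd.snd.fst
  have hF₃ := hF.mono fun y hy => hy.snd.snd.snd
  have hdF (X : ℝ × ℝ) : (fderiv ℝ F₀ x X, fderiv ℝ F₁ x X, fderiv ℝ F₂ x X, fderiv ℝ F₃ x X) =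
      weierstrassDifferential (ψ₁ x) (ψ₂ x) (φh₁ x) (φh₂ x) X := by
    rw [hF₀.self_of_nhds.fderiv, hF₁.self_of_nhds.fderiv, hF₂.self_of_nhds.fderiv,
      hF₃.self_of_nhds.fderiv]
    rfl
  have metric := neutralForm_weierstrassDifferential (ψ₁ x) (ψ₂ x) (φh₁ x) (φh₂ x)
  simp only [← hdF, neutralForm] at metric
  refine ⟨?_, ?_, ?_, ⟨?_, ?_, ?_, ?_⟩, fun hN => ?_⟩
  · simpa [duR, dvR] using metric (1, 0) (0, 1)
  · simpa [sq, duR] using congrArg Neg.neg (metric (1, 0) (1, 0))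
  · simpa [sq, dvR] using metric (0, 1) (0, 1)
  · exact boxR_eq_zero_of_mem_conformalSubalgebra
      (add_mem (neg_mem (mul_mem hψ₁ hφh₁)) (mul_mem hψ₂ hφh₂)) hF₀
  · exact boxR_eq_zero_of_mem_conformalSubalgebra
      (sub_mem (neg_mem (mul_mem hψ₁ hφh₁)) (mul_mem hψ₂ hφh₂)) hF₁
  · exact boxR_eq_zero_of_mem_conformalSubalgebra
      (add_mem (mul_mem hψ₂ hφh₁) (mul_mem hψ₁ hφh₂)) hF₂
  · exact boxR_eq_zero_of_mem_conformalSubalgebra (Subalgebra.smul_mem _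
      (add_mem (neg_mem (mul_mem hψ₂ hφh₁)) (mul_mem hψ₁ hφh₂)) sA) hF₃
  · simpa only [hdF] using weierstrassDifferential_injective hN

end Weierstrass

/-- Weierstrass representation of minimal Lorentzian surfaces in `ℝ^{2,2}`:
if `ψ₁, ψ₂, φ̂₁, φ̂₂ : ℝ² → 𝒜` are conformal (`∂_â` vanishes) and the differential of the `C²`
map `F = (F₀,F₁,F₂,F₃)` is prescribed by the minimal Weierstrass integrands, then `F`
satisfies the conformality relations (with `φ_α` the conjugate of `φ̂_α`) and the wave equation
`-∂²F/∂u² + ∂²F/∂v² = 0`; wherever `|ψ₂φ₁ - ψ₁φ₂|² ≠ 0` the differential is injective, so `F`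
is a conformal minimal immersion into `ℝ^{2,2}`. -/
theorem stmt14 (ψ₁ ψ₂ φh₁ φh₂ : ℝ × ℝ → LorentzA) (F₀ F₁ F₂ F₃ : ℝ × ℝ → ℝ)
    (hψ₁ : ContDiff ℝ 1 ψ₁) (hψ₂ : ContDiff ℝ 1 ψ₂)
    (hφh₁ : ContDiff ℝ 1 φh₁) (hφh₂ : ContDiff ℝ 1 φh₂)
    (hc₁ : ∀ x, Dahat ψ₁ x = 0) (hc₂ : ∀ x, Dahat ψ₂ x = 0)
    (hc₃ : ∀ x, Dahat φh₁ x = 0) (hc₄ : ∀ x, Dahat φh₂ x = 0)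
    (hF₀ : ContDiff ℝ 2 F₀) (hF₁ : ContDiff ℝ 2 F₁)
    (hF₂ : ContDiff ℝ 2 F₂) (hF₃ : ContDiff ℝ 2 F₃)
    (hW0 : ∀ x X : ℝ × ℝ, fderiv ℝ F₀ x X =
      ReA ((-(ψ₁ x * φh₁ x) + ψ₂ x * φh₂ x) * mkA X.1 X.2))
    (hW1 : ∀ x X : ℝ × ℝ, fderiv ℝ F₁ x X =
      ReA ((-(ψ₁ x * φh₁ x) - ψ₂ x * φh₂ x) * mkA X.1 X.2))
    (hW2 : ∀ x X : ℝ × ℝ, fderiv ℝ F₂ x X =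
      ReA ((ψ₂ x * φh₁ x + ψ₁ x * φh₂ x) * mkA X.1 X.2))
    (hW3 : ∀ x X : ℝ × ℝ, fderiv ℝ F₃ x X =
      ImA ((-(ψ₂ x * φh₁ x) + ψ₁ x * φh₂ x) * mkA X.1 X.2)) :
    ∀ x : ℝ × ℝ,
      (-(duR F₀ x * dvR F₀ x) + duR F₁ x * dvR F₁ x - duR F₂ x * dvR F₂ x +
        duR F₃ x * dvR F₃ x = 0) ∧
      (-(-(duR F₀ x) ^ 2 + (duR F₁ x) ^ 2 - (duR F₂ x) ^ 2 + (duR F₃ x) ^ 2) =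
        nsqA (ψ₂ x * conjA (φh₁ x) - ψ₁ x * conjA (φh₂ x))) ∧
      (-(dvR F₀ x) ^ 2 + (dvR F₁ x) ^ 2 - (dvR F₂ x) ^ 2 + (dvR F₃ x) ^ 2 =
        nsqA (ψ₂ x * conjA (φh₁ x) - ψ₁ x * conjA (φh₂ x))) ∧
      (boxR F₀ x = 0 ∧ boxR F₁ x = 0 ∧ boxR F₂ x = 0 ∧ boxR F₃ x = 0) ∧
      (nsqA (ψ₂ x * conjA (φh₁ x) - ψ₁ x * conjA (φh₂ x)) ≠ 0 →
        Function.Injective fun X : ℝ × ℝ =>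
          (fderiv ℝ F₀ x X, fderiv ℝ F₁ x X, fderiv ℝ F₂ x X, fderiv ℝ F₃ x X)) :=
  fun x => stmt14_general
    ⟨hψ₁.differentiable one_ne_zero x, hc₁ x⟩ ⟨hψ₂.differentiable one_ne_zero x, hc₂ x⟩
    ⟨hφh₁.differentiable one_ne_zero x, hc₃ x⟩ ⟨hφh₂.differentiable one_ne_zero x, hc₄ x⟩
    (.of_forall fun y => hasFDerivAt_weierstrassDifferential
      (hF₀.differentiable two_ne_zero y) (hF₁.differentiable two_ne_zero y)
      (hF₂.differentiable two_ne_zero y) (hF₃.differentiable two_ne_zero y)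
      (hW0 y) (hW1 y) (hW2 y) (hW3 y))
end
end

section
/- Let U ⊆ ℝ² be open and B : U → SL₂(𝒜) a C¹ map such that B⁻¹·∂_u B = [[0, θ₀], [ω₀, 0]] and B⁻¹·∂_v B = [[0, σθ₀], [σω₀, 0]] for conformal maps θ₀, ω₀ : U → 𝒜. Then F := B·diag(−1, 1)·B* satisfies: (i) F = F* and det F = −1, i.e. F takes values in the pseudo-sphere 𝕊^{1,2} ≅ {C ∈ Herm₂(𝒜) : det C = −1}; (ii) for every X = (X₁, X₂) ∈ ℝ², with z := X₁ + σX₂, one has dF(X) = B·[[0, θ₀z − ω̂₀ẑ], [θ̂₀ẑ − ω₀z, 0]]·B* and −det(dF(X)) = |θ₀z − ω̂₀ẑ|², which is the induced metric of the immersion. -/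
noncomputable section

/-- The directional derivative `dF_x(X)` of a matrix-valued map, taken entrywise. -/
def dMat (Fm : ℝ × ℝ → M2A) (x X : ℝ × ℝ) : M2A :=
  Matrix.of fun i j => fderiv ℝ (fun y => Fm y i j) x X

/-! The hypotheses on `∂_u B` and `∂_v B` say that `dB(X) = B·zN` with `N = [[0, θ₀], [ω₀, 0]]`.
Since `*` is a real-linear anti-automorphism of `M₂(𝒜)`, the product rule applied to `F = B·D·B*`,
`D = diag(-1, 1)`, gives `dF(X) = B·(zN·D + D·(zN)*)·B*`.  The bracket is off-diagonal with
conjugate entries, and congruence by `B` preserves determinants because `det B = 1`. -/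

/-- Conjugation of `𝒜` as an automorphism of rings, for transport along `Matrix.map`. -/
def conjRingEquiv : LorentzA ≃+* LorentzA := RingEquiv.prodComm

theorem coe_conjRingEquiv : ⇑conjRingEquiv = conjA := rfl

theorem conjA_zero : conjA 0 = 0 := rfl

theorem conjA_one : conjA 1 = 1 := rfl

theorem mkA_smul {M : Type*} [AddCommMonoid M] [Module ℝ M] [Module LorentzA M]
    [IsScalarTower ℝ LorentzA M] (u v : ℝ) (m : M) :
    mkA u v • m = u • m + v • sA • m := by
  have mkA_eq : mkA u v = u • (1 : LorentzA) + v • sA := by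
    ext <;> simp [mkA, sA, sub_eq_add_neg]
  rw [mkA_eq, add_smul, smul_assoc, smul_assoc, one_smul]

theorem ctrans_ctrans (C : M2A) : ctrans (ctrans C) = C := rfl

theorem ctrans_mul (C D : M2A) : ctrans (C * D) = ctrans D * ctrans C := by
  simp only [ctrans, ← coe_conjRingEquiv, Matrix.map_mul, Matrix.transpose_mul]

theorem ctrans_of (a b c d : LorentzA) :
    ctrans !![a, b; c, d] = !![conjA a, conjA c; conjA b, conjA d] := by
  ext1 i j
  fin_cases i <;> fin_cases j <;> rfl

theorem det_ctrans (C : M2A) : (ctrans C).det = conjA C.det := by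
  rw [ctrans, Matrix.det_transpose, ← coe_conjRingEquiv]
  exact (conjRingEquiv.map_det C).symm

theorem mul_mul_ctrans_mem_Herm2 (B : M2A) {D : M2A} (hD : D ∈ Herm2) :
    B * D * ctrans B ∈ Herm2 := by
  have hD' : ctrans D = D := hD.symm
  change B * D * ctrans B = ctrans (B * D * ctrans B)
  rw [ctrans_mul, ctrans_mul, ctrans_ctrans, hD', mul_assoc]

theorem det_mul_mul_ctrans_of_det_eq_one {B : M2A} (hB : B.det = 1) (D : M2A) :
    (B * D * ctrans B).det = D.det := by
  rw [Matrix.det_mul, Matrix.det_mul, det_ctrans, hB, conjA_one, one_mul, mul_one]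

theorem diag_neg_one_one_mem_Herm2 : !![(-1 : LorentzA), 0; 0, 1] ∈ Herm2 :=
  (ctrans_of (-1) 0 0 1).symm

theorem antidiag_mul_diag_add_diag_mul_ctrans (a b : LorentzA) :
    !![0, a; b, 0] * !![-1, 0; 0, 1] + !![-1, 0; 0, 1] * ctrans !![0, a; b, 0] =
      !![0, a - conjA b; conjA a - b, 0] := by
  simp [ctrans_of, conjA_zero, sub_eq_add_neg, add_comm]

theorem neg_det_antidiag_conjA (a : LorentzA) :
    -(!![0, a; conjA a, 0] : M2A).det = a * conjA a := by
  simp [Matrix.det_fin_two_of]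

section Derivative

theorem dMat_eq_add (B : ℝ × ℝ → M2A) (x X : ℝ × ℝ) :
    dMat B x X = X.1 • dMat B x (1, 0) + X.2 • dMat B x (0, 1) := by
  have hX : X = X.1 • ((1, 0) : ℝ × ℝ) + X.2 • ((0, 1) : ℝ × ℝ) := by ext <;> simp
  ext1 i j
  conv_lhs => rw [hX]
  simp only [dMat, Matrix.of_apply, Matrix.add_apply, Matrix.smul_apply, map_add, map_smul]

theorem dMat_const (D : M2A) (x X : ℝ × ℝ) : dMat (fun _ => D) x X = 0 := by
  ext1 i j
  simp [dMat]

theorem dMat_ctrans (B : ℝ × ℝ → M2A) (x X : ℝ × ℝ) :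
    dMat (fun y => ctrans (B y)) x X = ctrans (dMat B x X) := by
  ext1 i j
  exact DFunLike.congr_fun
    ((ContinuousLinearEquiv.prodComm ℝ ℝ ℝ).comp_fderiv (f := fun y => B y j i) (x := x)) X

variable {B P Q : ℝ × ℝ → M2A} {x : ℝ × ℝ}

theorem differentiableAt_ctrans_apply (hB : ∀ i j, DifferentiableAt ℝ (fun y => B y i j) x)
    (i j : Fin 2) : DifferentiableAt ℝ (fun y => ctrans (B y) i j) x :=
  (ContinuousLinearEquiv.prodComm ℝ ℝ ℝ).differentiableAt.comp x (hB j i)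

theorem differentiableAt_mul_apply (hP : ∀ i j, DifferentiableAt ℝ (fun y => P y i j) x)
    (hQ : ∀ i j, DifferentiableAt ℝ (fun y => Q y i j) x) (i j : Fin 2) :
    DifferentiableAt ℝ (fun y => (P y * Q y) i j) x := by
  simp only [Matrix.mul_apply]
  fun_prop

theorem dMat_mul (hP : ∀ i j, DifferentiableAt ℝ (fun y => P y i j) x)
    (hQ : ∀ i j, DifferentiableAt ℝ (fun y => Q y i j) x) (X : ℝ × ℝ) :
    dMat (fun y => P y * Q y) x X = dMat P x X * Q x + P x * dMat Q x X := by
  ext1 i j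
  simp only [dMat, Matrix.add_apply, Matrix.mul_apply, Matrix.of_apply]
  rw [fderiv_fun_sum fun k _ => (hP i k).fun_mul (hQ k j), ← Finset.sum_add_distrib]
  simp only [sum_apply]
  refine Finset.sum_congr rfl fun k _ => ?_
  rw [fderiv_fun_mul (hP i k) (hQ k j)]
  simp [mul_comm, add_comm]

theorem dMat_mul_mul_ctrans (hB : ∀ i j, DifferentiableAt ℝ (fun y => B y i j) x) (D : M2A)
    {X : ℝ × ℝ} {N : M2A} (hN : dMat B x X = B x * N) :
    dMat (fun y => B y * D * ctrans (B y)) x X =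
      B x * (N * D + D * ctrans N) * ctrans (B x) := by
  have hD : ∀ i j, DifferentiableAt ℝ (fun _ : ℝ × ℝ => D i j) x := fun i j =>
    differentiableAt_const (D i j)
  rw [dMat_mul (differentiableAt_mul_apply hB hD) (differentiableAt_ctrans_apply hB),
    dMat_mul hB hD, dMat_const, dMat_ctrans, hN, ctrans_mul]
  noncomm_ring

theorem dMat_eq_mul_mkA_smul (hdet : IsUnit (B x).det) {N : M2A}
    (hu : (B x)⁻¹ * dMat B x (1, 0) = N) (hv : (B x)⁻¹ * dMat B x (0, 1) = sA • N)
    (X : ℝ × ℝ) : dMat B x X = B x * (mkA X.1 X.2 • N) := by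
  rw [mkA_smul, ← hv, ← hu, Matrix.mul_add, Matrix.mul_smul, Matrix.mul_smul,
    Matrix.mul_nonsing_inv_cancel_left _ _ hdet, Matrix.mul_nonsing_inv_cancel_left _ _ hdet]
  exact dMat_eq_add B x X

end Derivative

theorem stmt17_general {B : ℝ × ℝ → M2A} {x : ℝ × ℝ} {θ ω : LorentzA}
    (hB : ∀ i j, DifferentiableAt ℝ (fun y => B y i j) x) (hdet : (B x).det = 1)
    (hu : (B x)⁻¹ * dMat B x (1, 0) = !![0, θ; ω, 0])
    (hv : (B x)⁻¹ * dMat B x (0, 1) = !![0, sA * θ; sA * ω, 0]) :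
    (B x * !![(-1 : LorentzA), 0; 0, 1] * ctrans (B x) ∈ Herm2 ∧
      (B x * !![(-1 : LorentzA), 0; 0, 1] * ctrans (B x)).det = -1) ∧
    (∀ X : ℝ × ℝ,
      dMat (fun y => B y * !![(-1 : LorentzA), 0; 0, 1] * ctrans (B y)) x X =
        B x * !![0, θ * mkA X.1 X.2 - conjA ω * conjA (mkA X.1 X.2);
                 conjA θ * conjA (mkA X.1 X.2) - ω * mkA X.1 X.2, 0] * ctrans (B x) ∧
      -(dMat (fun y => B y * !![(-1 : LorentzA), 0; 0, 1] * ctrans (B y)) x X).det =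
        (θ * mkA X.1 X.2 - conjA ω * conjA (mkA X.1 X.2)) *
          conjA (θ * mkA X.1 X.2 - conjA ω * conjA (mkA X.1 X.2))) := by
  refine ⟨⟨mul_mul_ctrans_mem_Herm2 _ diag_neg_one_one_mem_Herm2, ?_⟩, fun X => ?_⟩
  · rw [det_mul_mul_ctrans_of_det_eq_one hdet, Matrix.det_fin_two_of]
    ring
  · set z := mkA X.1 X.2
    have hdB : dMat B x X = B x * !![0, θ * z; ω * z, 0] := by
      rw [dMat_eq_mul_mkA_smul (hdet ▸ isUnit_one) hu (by simpa using hv)]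
      simp [z, mul_comm]
    have hdF := dMat_mul_mul_ctrans hB !![-1, 0; 0, 1] hdB
    rw [antidiag_mul_diag_add_diag_mul_ctrans, conjA_mul, conjA_mul] at hdF
    refine ⟨hdF, ?_⟩
    rw [hdF, det_mul_mul_ctrans_of_det_eq_one hdet, ← neg_det_antidiag_conjA]
    simp only [conjA_sub, conjA_mul, conjA_conjA]

/-- Let `B : U → SL₂(𝒜)` be `C¹` with `B⁻¹dB = [[0, θ], [ω, 0]]` for
conformal 1-forms `θ = θ₀·da`, `ω = ω₀·da`.  Then `F = B·diag(-1,1)·B*` takes values in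
`𝕊^{1,2} ≅ {C ∈ Herm₂(𝒜) : det C = -1}`, its differential is
`dF(X) = B·[[0, θ₀z - ω̂₀ẑ], [θ̂₀ẑ - ω₀z, 0]]·B*`, and
`-det dF(X) = |θ₀z - ω̂₀ẑ|²`, the induced metric of the immersion. -/
theorem stmt17 (U : Set (ℝ × ℝ)) (hU : IsOpen U)
    (B : ℝ × ℝ → M2A) (θ₀ ω₀ : ℝ × ℝ → LorentzA)
    (hB : ∀ i j, ContDiffOn ℝ 1 (fun x => B x i j) U)
    (hBsl : ∀ x ∈ U, (B x).det = 1)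
    (hθ : ContDiffOn ℝ 1 θ₀ U) (hω : ContDiffOn ℝ 1 ω₀ U)
    (hθc : ∀ x ∈ U, Dahat θ₀ x = 0) (hωc : ∀ x ∈ U, Dahat ω₀ x = 0)
    (hu : ∀ x ∈ U, (B x)⁻¹ * dMat B x (1, 0) = !![0, θ₀ x; ω₀ x, 0])
    (hv : ∀ x ∈ U, (B x)⁻¹ * dMat B x (0, 1) = !![0, sA * θ₀ x; sA * ω₀ x, 0]) :
    (∀ x ∈ U, B x * !![(-1 : LorentzA), 0; 0, 1] * ctrans (B x) ∈ Herm2 ∧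
      (B x * !![(-1 : LorentzA), 0; 0, 1] * ctrans (B x)).det = -1) ∧
    (∀ x ∈ U, ∀ X : ℝ × ℝ,
      dMat (fun y => B y * !![(-1 : LorentzA), 0; 0, 1] * ctrans (B y)) x X =
        B x * !![0, θ₀ x * mkA X.1 X.2 - conjA (ω₀ x) * conjA (mkA X.1 X.2);
                 conjA (θ₀ x) * conjA (mkA X.1 X.2) - ω₀ x * mkA X.1 X.2, 0] * ctrans (B x) ∧
      -(dMat (fun y => B y * !![(-1 : LorentzA), 0; 0, 1] * ctrans (B y)) x X).det =
        (θ₀ x * mkA X.1 X.2 - conjA (ω₀ x) * conjA (mkA X.1 X.2)) *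
          conjA (θ₀ x * mkA X.1 X.2 - conjA (ω₀ x) * conjA (mkA X.1 X.2))) := by
  have pointwise x (hx : x ∈ U) := stmt17_general
    (fun i j => ((hB i j).contDiffAt (hU.mem_nhds hx)).differentiableAt one_ne_zero)
    (hBsl x hx) (hu x hx) (hv x hx)
  exact ⟨fun x hx => (pointwise x hx).1, fun x hx => (pointwise x hx).2⟩
end
end

section
/- A C¹ map ψ : ℝ² → 𝒜, (u, v) ↦ ψ(u, v), satisfies the conformality equation ∂_v ψ = σ·∂_u ψ (equivalently ∂_â ψ = 0) if and only if there exist C¹ functions ψ₁, ψ₂ : ℝ → ℝ such that ψ(u, v) = ((1+σ)/2)·ψ₁(u+v) + ((1−σ)/2)·ψ₂(u−v) for all (u, v) ∈ ℝ². -/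
noncomputable section

/-!
In split coordinates `σ` acts as `(1, -1)`, so `∂_v ψ = σ·∂_u ψ` decouples into the two transport
equations `∂_v f = c • ∂_u f` with `c = 1` for the first component and `c = -1` for the second.
Such an equation says that the derivative of `f` along `(-c, 1)` vanishes, i.e. that `f` is constant
on the characteristics `u + c v = const`, hence determined by its restriction to the axis `v = 0`.
-/

section Transport

variable {𝕜 E F : Type*} [RCLike 𝕜] [NormedAddCommGroup F] [NormedSpace 𝕜 F]

lemma forall_hasLineDerivAt_zero_iff [AddCommGroup E] [Module 𝕜 E] {f : E → F} {d : E} :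
    (∀ x, HasLineDerivAt 𝕜 f 0 x d) ↔ ∀ x (t : 𝕜), f (x + t • d) = f x := by
  refine ⟨fun h x t ↦ ?_, fun h x ↦ ?_⟩
  · have hderiv (s : 𝕜) : HasDerivAt (fun r : 𝕜 ↦ f (x + r • d)) 0 s := by
      have hshift : HasDerivAt (fun r : 𝕜 ↦ f (x + s • d + r • d)) 0 (s - s) := by
        rw [sub_self]
        exact h (x + s • d)
      simpa [add_assoc, ← add_smul] using hshift.comp_sub_const s s
    simpa using is_const_of_deriv_eq_zero (fun s ↦ (hderiv s).differentiableAt)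
      (fun s ↦ (hderiv s).deriv) t 0
  · simpa only [HasLineDerivAt, h] using hasDerivAt_const (0 : 𝕜) (f x)

variable [NormedAddCommGroup E] [NormedSpace 𝕜 E]

lemma forall_fderiv_apply_eq_zero_iff {f : E → F} (hf : Differentiable 𝕜 f) {d : E} :
    (∀ x, fderiv 𝕜 f x d = 0) ↔ ∀ x (t : 𝕜), f (x + t • d) = f x := by
  rw [← forall_hasLineDerivAt_zero_iff]
  refine forall_congr' fun x ↦ ?_
  have hline := (hf x).hasFDerivAt.hasLineDerivAt d
  exact ⟨fun h ↦ h ▸ hline, hline.unique⟩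

lemma transport_equation_iff {f : E × 𝕜 → F} (hf : Differentiable 𝕜 f) (c : E) :
    (∀ x, fderiv 𝕜 f x (0, 1) = fderiv 𝕜 f x (c, 0)) ↔
      ∀ u v, f (u, v) = f (u + v • c, 0) := by
  have hcharacteristic (x : E × 𝕜) :
      fderiv 𝕜 f x (0, 1) = fderiv 𝕜 f x (c, 0) ↔ fderiv 𝕜 f x (-c, 1) = 0 := by
    rw [← sub_eq_zero, ← map_sub, Prod.mk_sub_mk, zero_sub, sub_zero]
  simp only [hcharacteristic, forall_fderiv_apply_eq_zero_iff hf]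
  refine ⟨fun h u v ↦ ?_, fun h ⟨u, v⟩ t ↦ ?_⟩
  · simpa using h (u + v • c, 0) v
  · calc
      f ((u, v) + t • (-c, 1)) = f (u + t • -c + (v + t) • c, 0) := by
        simpa using h (u + t • -c) (v + t)
      _ = f (u + v • c, 0) := by congr 2; module
      _ = f (u, v) := (h u v).symm

end Transport

section Conformal

variable {ψ : ℝ × ℝ → LorentzA}

lemma eP_mul_toA_add_eM_mul_toA (a b : ℝ) : eP * toA a + eM * toA b = (a, b) := by
  ext <;> simp [eP, eM, sA, toA]

lemma dvA_eq_sA_mul_duA_iff {x : ℝ × ℝ} (hψ : DifferentiableAt ℝ ψ x) :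
    dvA ψ x = sA * duA ψ x ↔
      fderiv ℝ (fun y ↦ (ψ y).1) x (0, 1) = fderiv ℝ (fun y ↦ (ψ y).1) x (1, 0) ∧
      fderiv ℝ (fun y ↦ (ψ y).2) x (0, 1) = fderiv ℝ (fun y ↦ (ψ y).2) x (-1, 0) := by
  have hneg : ((-1, 0) : ℝ × ℝ) = -(1, 0) := by rw [Prod.neg_mk, neg_zero]
  rw [fderiv.fst hψ, fderiv.snd hψ, hneg, map_neg, Prod.ext_iff]
  simp [dvA, duA, sA]

lemma forall_dvA_eq_sA_mul_duA_iff (hψ : Differentiable ℝ ψ) :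
    (∀ x, dvA ψ x = sA * duA ψ x) ↔
      ∀ u v : ℝ, ψ (u, v) = ((ψ (u + v, 0)).1, (ψ (u - v, 0)).2) := by
  calc
    (∀ x, dvA ψ x = sA * duA ψ x) ↔
        (∀ u v : ℝ, (ψ (u, v)).1 = (ψ (u + v • 1, 0)).1) ∧
          ∀ u v : ℝ, (ψ (u, v)).2 = (ψ (u + v • (-1), 0)).2 := by
      simp only [dvA_eq_sA_mul_duA_iff (hψ _), forall_and]
      exact and_congr (transport_equation_iff hψ.fst 1) (transport_equation_iff hψ.snd (-1))
    _ ↔ ∀ u v : ℝ, ψ (u, v) = ((ψ (u + v, 0)).1, (ψ (u - v, 0)).2) := by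
      simp [Prod.ext_iff, forall_and, sub_eq_add_neg]

end Conformal

theorem stmt18_general {n : WithTop ℕ∞} (hn : n ≠ 0) (ψ : ℝ × ℝ → LorentzA) :
    (ContDiff ℝ n ψ ∧ ∀ x, dvA ψ x = sA * duA ψ x) ↔
      ∃ ψ₁ ψ₂ : ℝ → ℝ, ContDiff ℝ n ψ₁ ∧ ContDiff ℝ n ψ₂ ∧
        ∀ u v : ℝ, ψ (u, v) = eP * toA (ψ₁ (u + v)) + eM * toA (ψ₂ (u - v)) := by
  simp only [eP_mul_toA_add_eM_mul_toA]
  constructor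
  · rintro ⟨hψ, hconf⟩
    exact ⟨fun t ↦ (ψ (t, 0)).1, fun t ↦ (ψ (t, 0)).2, by fun_prop, by fun_prop,
      (forall_dvA_eq_sA_mul_duA_iff (hψ.differentiable hn)).mp hconf⟩
  · rintro ⟨ψ₁, ψ₂, hψ₁, hψ₂, hrep⟩
    obtain rfl : ψ = fun x ↦ (ψ₁ (x.1 + x.2), ψ₂ (x.1 - x.2)) := funext fun x ↦ hrep x.1 x.2
    have hψ : ContDiff ℝ n fun x : ℝ × ℝ ↦ (ψ₁ (x.1 + x.2), ψ₂ (x.1 - x.2)) := by fun_prop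
    exact ⟨hψ, (forall_dvA_eq_sA_mul_duA_iff (hψ.differentiable hn)).mpr (by simp)⟩

/-- A `C¹` map `ψ : ℝ² → 𝒜` satisfies the conformality equation
`∂_v ψ = σ·∂_u ψ` (equivalently `∂_â ψ = 0`) if and only if there are `C¹` functions
`ψ₁, ψ₂ : ℝ → ℝ` with `ψ(u,v) = ((1+σ)/2)·ψ₁(u+v) + ((1-σ)/2)·ψ₂(u-v)`. -/
theorem stmt18 (ψ : ℝ × ℝ → LorentzA) (hψ : ContDiff ℝ 1 ψ) :
    (∀ x, dvA ψ x = sA * duA ψ x) ↔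
      ∃ ψ₁ ψ₂ : ℝ → ℝ, ContDiff ℝ 1 ψ₁ ∧ ContDiff ℝ 1 ψ₂ ∧
        ∀ u v : ℝ, ψ (u, v) = eP * toA (ψ₁ (u + v)) + eM * toA (ψ₂ (u - v)) := by
  simpa only [hψ, true_and] using stmt18_general one_ne_zero ψ
end
end

section
/- Let B : ℝ² → M₂(𝒜) be a C¹ map each of whose entries is conformal (∂_â of each entry vanishes) and with det B(u,v) = 1 for all (u, v). Then there exist C¹ curves B₁, B₂ : ℝ → SL₂(ℝ) such that B(u, v) = ((1+σ)/2)·B₁(u+v) + ((1−σ)/2)·B₂(u−v) for all (u, v), and consequently B(u,v)·B(u,v)* = ((1+σ)/2)·B₁(u+v)·B₂(u−v)ᵗ + ((1−σ)/2)·B₂(u−v)·B₁(u+v)ᵗ; hence under the identification Herm₂(𝒜) ≅ M₂(ℝ) (C = ((1+σ)/2)C₁ + ((1−σ)/2)C₁ᵗ ↦ C₁), the map B·B* corresponds to (u, v) ↦ B₁(u+v)·B₂(u−v)ᵗ ∈ SL₂(ℝ): a flat Lorentzian surface in the Anti-de Sitter space ℍ^{2,1} ≅ SL₂(ℝ) is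 locally a product of two curves. -/
noncomputable section

/-! In the split coordinates `𝒜 ≅ ℝ × ℝ`, the equation `∂_â f = 0` says that the first component
of `f` is constant along the null direction `(1, -1)` and the second along `(1, 1)`, so they are
functions of `u + v` and of `u - v` alone. The two coordinate projections are ring homomorphisms
exchanged by conjugation, so products, determinants and `B*` can be computed componentwise. -/

section NullDirections

theorem apply_add_smul_eq_of_fderiv_apply_eq_zero {𝕜 E F : Type*} [RCLike 𝕜]
    [NormedAddCommGroup E] [NormedSpace 𝕜 E] [NormedAddCommGroup F] [NormedSpace 𝕜 F]
    {f : E → F} (hf : Differentiable 𝕜 f) {w : E} (hw : ∀ x, fderiv 𝕜 f x w = 0)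
    (x : E) (t : 𝕜) : f (x + t • w) = f x := by
  have hderiv (s : 𝕜) : HasDerivAt (fun r : 𝕜 => f (x + r • w)) 0 s := by
    have hline : HasDerivAt (fun r : 𝕜 => x + r • w) w s := by
      simpa only [one_smul] using ((hasDerivAt_id' s).smul_const w).const_add x
    exact hw (x + s • w) ▸ (hf (x + s • w)).hasFDerivAt.comp_hasDerivAt s hline
  simpa only [zero_smul, add_zero] using
    is_const_of_deriv_eq_zero (fun s => (hderiv s).differentiableAt) (fun s => (hderiv s).deriv) t 0

theorem Dahat_eq (f : ℝ × ℝ → LorentzA) (x : ℝ × ℝ) :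
    Dahat f x = (2 : ℝ)⁻¹ • ((fderiv ℝ f x (1, -1)).1, (fderiv ℝ f x (1, 1)).2) := by
  have hminus : ((1, -1) : ℝ × ℝ) = (1, 0) - (0, 1) := by simp
  have hplus : ((1, 1) : ℝ × ℝ) = (1, 0) + (0, 1) := by simp
  rw [hminus, hplus, map_sub, map_add, Dahat, duA, dvA, sA]
  ext <;> simp

variable {f : ℝ × ℝ → LorentzA}

theorem Dahat_eq_zero_iff {x : ℝ × ℝ} :
    Dahat f x = 0 ↔ (fderiv ℝ f x (1, -1)).1 = 0 ∧ (fderiv ℝ f x (1, 1)).2 = 0 := by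
  simp [Dahat_eq, Prod.ext_iff]

theorem fst_apply_eq_of_Dahat_eq_zero (hf : Differentiable ℝ f) (hconf : ∀ x, Dahat f x = 0)
    (u v : ℝ) : (f (u, v)).1 = (f (u + v, 0)).1 := by
  have hnull (x : ℝ × ℝ) : fderiv ℝ (fun y => (f y).1) x (1, -1) = 0 := by
    rw [fderiv.fst (hf x)]
    exact (Dahat_eq_zero_iff.1 (hconf x)).1
  simpa using (apply_add_smul_eq_of_fderiv_apply_eq_zero hf.fst hnull (u, v) v).symm

theorem snd_apply_eq_of_Dahat_eq_zero (hf : Differentiable ℝ f) (hconf : ∀ x, Dahat f x = 0)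
    (u v : ℝ) : (f (u, v)).2 = (f (u - v, 0)).2 := by
  have hnull (x : ℝ × ℝ) : fderiv ℝ (fun y => (f y).2) x (1, 1) = 0 := by
    rw [fderiv.snd (hf x)]
    exact (Dahat_eq_zero_iff.1 (hconf x)).2
  simpa [sub_eq_add_neg] using
    (apply_add_smul_eq_of_fderiv_apply_eq_zero hf.snd hnull (u, v) (-v)).symm

end NullDirections

section SplitMatrices

variable {m n : Type*}

theorem eP_eq : eP = (1, 0) := by
  ext <;> simp [eP, sA]

theorem eM_eq : eM = (0, 1) := by
  ext <;> simp [eM, sA]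

theorem eq_eP_smul_map_fst_add_eM_smul_map_snd (M : Matrix m n LorentzA) :
    M = eP • (M.map Prod.fst).map toA + eM • (M.map Prod.snd).map toA := by
  ext i j <;> simp [eP_eq, eM_eq, toA]

theorem mul_transpose_map_conjA [Fintype n] (M : Matrix m n LorentzA) :
    M * (M.map conjA).transpose =
      eP • (M.map Prod.fst * (M.map Prod.snd).transpose).map toA +
        eM • (M.map Prod.snd * (M.map Prod.fst).transpose).map toA := by
  have hfst : (M * (M.map conjA).transpose).map Prod.fst =
      M.map Prod.fst * (M.map Prod.snd).transpose :=
    Matrix.map_mul (f := RingHom.fst ℝ ℝ)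
  have hsnd : (M * (M.map conjA).transpose).map Prod.snd =
      M.map Prod.snd * (M.map Prod.fst).transpose :=
    Matrix.map_mul (f := RingHom.snd ℝ ℝ)
  rw [← hfst, ← hsnd]
  exact eq_eP_smul_map_fst_add_eM_smul_map_snd _

variable [Fintype n] [DecidableEq n] {M : Matrix n n LorentzA}

theorem det_map_fst_eq_one (hM : M.det = 1) : (M.map Prod.fst).det = 1 := by
  simpa [hM] using ((RingHom.fst ℝ ℝ).map_det M).symm

theorem det_map_snd_eq_one (hM : M.det = 1) : (M.map Prod.snd).det = 1 := by
  simpa [hM] using ((RingHom.snd ℝ ℝ).map_det M).symm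

end SplitMatrices

theorem stmt19_general {ι : Type*} [Fintype ι] [DecidableEq ι] {k : WithTop ℕ∞} (hk : k ≠ 0)
    (B : ℝ × ℝ → Matrix ι ι LorentzA)
    (hB : ∀ i j, ContDiff ℝ k (fun x => B x i j))
    (hconf : ∀ i j x, Dahat (fun y => B y i j) x = 0)
    (hdet : ∀ x, (B x).det = 1) :
    ∃ B₁ B₂ : ℝ → Matrix ι ι ℝ,
      (∀ i j, ContDiff ℝ k fun t => B₁ t i j) ∧
      (∀ i j, ContDiff ℝ k fun t => B₂ t i j) ∧
      (∀ t, (B₁ t).det = 1) ∧ (∀ t, (B₂ t).det = 1) ∧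
      (∀ u v : ℝ, B (u, v) = eP • (B₁ (u + v)).map toA + eM • (B₂ (u - v)).map toA) ∧
      (∀ u v : ℝ, B (u, v) * ((B (u, v)).map conjA).transpose =
        eP • (B₁ (u + v) * (B₂ (u - v)).transpose).map toA +
          eM • (B₂ (u - v) * (B₁ (u + v)).transpose).map toA) ∧
      (∀ u v : ℝ, (B₁ (u + v) * (B₂ (u - v)).transpose).det = 1) := by
  let B₁ (t : ℝ) : Matrix ι ι ℝ := (B (t, 0)).map Prod.fst
  let B₂ (t : ℝ) : Matrix ι ι ℝ := (B (t, 0)).map Prod.snd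
  have hdiff (i j : ι) : Differentiable ℝ (fun x => B x i j) := (hB i j).differentiable hk
  have hfst (u v : ℝ) : (B (u, v)).map Prod.fst = B₁ (u + v) :=
    Matrix.ext fun i j => fst_apply_eq_of_Dahat_eq_zero (hdiff i j) (hconf i j) u v
  have hsnd (u v : ℝ) : (B (u, v)).map Prod.snd = B₂ (u - v) :=
    Matrix.ext fun i j => snd_apply_eq_of_Dahat_eq_zero (hdiff i j) (hconf i j) u v
  have hline (i j : ι) : ContDiff ℝ k fun t : ℝ => B (t, 0) i j :=
    (hB i j).comp (contDiff_prodMk_left 0)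
  have hdet₁ (t : ℝ) : (B₁ t).det = 1 := det_map_fst_eq_one (hdet (t, 0))
  have hdet₂ (t : ℝ) : (B₂ t).det = 1 := det_map_snd_eq_one (hdet (t, 0))
  refine ⟨B₁, B₂, fun i j => (hline i j).fst, fun i j => (hline i j).snd, hdet₁, hdet₂,
    fun u v => ?_, fun u v => ?_, fun u v => ?_⟩
  · rw [← hfst, ← hsnd]
    exact eq_eP_smul_map_fst_add_eM_smul_map_snd _
  · rw [← hfst, ← hsnd]
    exact mul_transpose_map_conjA _
  · rw [Matrix.det_mul, Matrix.det_transpose, hdet₁, hdet₂, one_mul]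

/-- Let `B : ℝ² → M₂(𝒜)` be `C¹` with conformal entries and `det B = 1`.
Then there are `C¹` curves `B₁, B₂ : ℝ → SL₂(ℝ)` with
`B(u,v) = ((1+σ)/2)·B₁(u+v) + ((1-σ)/2)·B₂(u-v)`, hence
`B·B* = ((1+σ)/2)·B₁(u+v)·B₂(u-v)ᵗ + ((1-σ)/2)·B₂(u-v)·B₁(u+v)ᵗ`; under the identification
`Herm₂(𝒜) ≅ M₂(ℝ)` the map `B·B*` corresponds to `(u,v) ↦ B₁(u+v)·B₂(u-v)ᵗ ∈ SL₂(ℝ)`: a flat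
Lorentzian surface in `ℍ^{2,1} ≅ SL₂(ℝ)` is locally a product of two curves. -/
theorem stmt19 (B : ℝ × ℝ → M2A)
    (hB : ∀ i j, ContDiff ℝ 1 (fun x => B x i j))
    (hconf : ∀ i j x, Dahat (fun y => B y i j) x = 0)
    (hdet : ∀ x, (B x).det = 1) :
    ∃ B₁ B₂ : ℝ → Matrix (Fin 2) (Fin 2) ℝ,
      (∀ i j, ContDiff ℝ 1 fun t => B₁ t i j) ∧
      (∀ i j, ContDiff ℝ 1 fun t => B₂ t i j) ∧
      (∀ t, (B₁ t).det = 1) ∧ (∀ t, (B₂ t).det = 1) ∧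
      (∀ u v : ℝ, B (u, v) = eP • mR (B₁ (u + v)) + eM • mR (B₂ (u - v))) ∧
      (∀ u v : ℝ, B (u, v) * ctrans (B (u, v)) =
        eP • mR (B₁ (u + v) * (B₂ (u - v)).transpose) +
          eM • mR (B₂ (u - v) * (B₁ (u + v)).transpose)) ∧
      (∀ u v : ℝ, (B₁ (u + v) * (B₂ (u - v)).transpose).det = 1) :=
  stmt19_general one_ne_zero B hB hconf hdet
end
end
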